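/- Suppose X ⊆ ℝ^{n_x} contains the origin in its interior and is robustly invariant for the system x_{k+1} = g(x_k) + w_k, where g : X → ℝ^{n_x} is continuous and W ⊆ ℝ^{n_x} is bounded with 0 ∈ W. Suppose there exist a Lipschitz continuous function V : X → [0,∞) and K∞-functions α1, α2, α3 such that α1(‖x‖) ≤ V(x) ≤ α2(‖x‖) and V(g(x)) − V(x) ≤ −α3(‖x‖) for all x ∈ X. Then there exists a K-function σ such that V(g(x) + w) − V(x) ≤ −α3(‖x‖) + σ(‖w‖) for all x ∈ X and w ∈ W (i.e. V is an ISS-Lyapunov function), and consequently the origin is ISS for the system with region of attraction X. -/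

import Mathlib

/-!
A Lipschitz `V` absorbs the disturbance: `V (g x + w) ≤ V (g x) + L ‖w‖`, so `σ s = (L + 1) s`
works (the `+ 1` makes `σ` strictly increasing even if `L = 0`).

For ISS, put `a = α₃ ∘ α₂⁻¹`. Along a trajectory `v k = V (x k)` satisfies
`v (k+1) ≤ v k - a (v k) + c`, where `c` bounds `σ ‖w t‖`. By `exists_contraction` there is a
K-function `F` with `F v < v` for `v > 0` and `v - a v / 2 ≤ F v`. If `c ≤ a (v k) / 2` then
`v (k+1) ≤ F (v k)`; otherwise `v (k+1) ≤ v k + c ≤ a⁻¹ (2c) + c`. Induction gives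
`v k ≤ max (F^[k] (α₂ ‖x 0‖)) (a⁻¹ (2c) + c)`. The iterates of `F` tend to `0` because the only fixed
point of `F` in `[0,∞)` is `0`. Applying `α₁⁻¹` yields `β s t = α₁⁻¹ (F^[⌊t⌋] (α₂ s))` and
`γ r = α₁⁻¹ (a⁻¹ (2 σ r) + σ r)`.
-/

open Filter Topology MeasureTheory Bornology

/-- A K-function: continuous, strictly increasing on `[0,∞)` and vanishing at `0`. -/
def IsKFun (φ : ℝ → ℝ) : Prop :=
  ContinuousOn φ (Set.Ici 0) ∧ StrictMonoOn φ (Set.Ici 0) ∧ φ 0 = 0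

/-- A K∞-function: a K-function that tends to `∞`. -/
def IsKInfFun (φ : ℝ → ℝ) : Prop :=
  IsKFun φ ∧ Tendsto φ atTop atTop

/-- A KL-function. -/
def IsKLFun (β : ℝ → ℝ → ℝ) : Prop :=
  (∀ t ∈ Set.Ici (0:ℝ), IsKFun fun s => β s t) ∧
  ∀ s ∈ Set.Ici (0:ℝ), AntitoneOn (β s) (Set.Ici 0) ∧ Tendsto (β s) atTop (𝓝 0)


lemma IsKFun.nonneg {φ : ℝ → ℝ} (h : IsKFun φ) {s : ℝ} (hs : 0 ≤ s) : 0 ≤ φ s := by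
  have := h.2.1.monotoneOn (Set.mem_Ici.2 le_rfl) (Set.mem_Ici.2 hs) hs
  rwa [h.2.2] at this

lemma IsKFun.pos {φ : ℝ → ℝ} (h : IsKFun φ) {s : ℝ} (hs : 0 < s) : 0 < φ s := by
  have := h.2.1 (Set.mem_Ici.2 le_rfl) (Set.mem_Ici.2 hs.le) hs
  rwa [h.2.2] at this

lemma IsKFun.mono {φ : ℝ → ℝ} (h : IsKFun φ) {s t : ℝ} (hs : 0 ≤ s) (hst : s ≤ t) :
    φ s ≤ φ t :=
  h.2.1.monotoneOn (Set.mem_Ici.2 hs) (Set.mem_Ici.2 (hs.trans hst)) hst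

lemma IsKFun.comp {φ ψ : ℝ → ℝ} (h : IsKFun φ) (h' : IsKFun ψ) : IsKFun (fun s => φ (ψ s)) := by
  have hm : Set.MapsTo ψ (Set.Ici 0) (Set.Ici 0) := fun s hs => h'.nonneg hs
  refine ⟨h.1.comp h'.1 hm, fun s hs t ht hst => h.2.1 (hm hs) (hm ht) (h'.2.1 hs ht hst), ?_⟩
  simp only [h'.2.2, h.2.2]

lemma IsKFun.add {φ ψ : ℝ → ℝ} (h : IsKFun φ) (h' : IsKFun ψ) : IsKFun (fun s => φ s + ψ s) :=
  ⟨h.1.add h'.1, fun _ hs _ ht hst => add_lt_add (h.2.1 hs ht hst) (h'.2.1 hs ht hst), by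
    simp only [h'.2.2, h.2.2, add_zero]⟩

lemma isKFun_mul {c : ℝ} (hc : 0 < c) : IsKFun (fun s => c * s) :=
  ⟨by fun_prop, fun _ _ _ _ hst => mul_lt_mul_of_pos_left hst hc, mul_zero c⟩

lemma IsKFun.iterate {φ : ℝ → ℝ} (h : IsKFun φ) (n : ℕ) : IsKFun (φ^[n]) := by
  induction n with
  | zero => exact ⟨continuousOn_id, fun _ _ _ _ hst => hst, rfl⟩
  | succ n ih => exact ih.comp h

/-- A K∞-function has an inverse on `[0,∞)`, and this inverse is again a K-function. -/
lemma IsKInfFun.exists_inverse {φ : ℝ → ℝ} (h : IsKInfFun φ) :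
    ∃ ψ : ℝ → ℝ, IsKFun ψ ∧ (∀ s, 0 ≤ s → ψ (φ s) = s) ∧ ∀ s, 0 ≤ s → φ (ψ s) = s := by
  -- Extending `φ` by the identity on `(-∞,0)` makes it an order isomorphism of `ℝ`,
  -- whose inverse is continuous for free.
  set f : ℝ → ℝ := fun s => if 0 ≤ s then φ s else s with hf
  have hfn : ∀ s, 0 ≤ s → f s = φ s := fun s hs => if_pos hs
  have hmono : StrictMono f := by
    intro s t hst
    by_cases hs : 0 ≤ s
    · rw [hfn s hs, hfn t (hs.trans hst.le)]
      exact h.1.2.1 hs (hs.trans hst.le) hst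
    · by_cases ht : 0 ≤ t
      · rw [hfn t ht]
        have := h.1.nonneg ht
        simp only [hf, if_neg hs]
        linarith
      · simpa only [hf, if_neg hs, if_neg ht] using hst
  have hsurj : Function.Surjective f := by
    intro y
    by_cases hy : 0 ≤ y
    · obtain ⟨b, hb, hb0⟩ := ((h.2.eventually_ge_atTop y).and (eventually_ge_atTop 0)).exists
      obtain ⟨s, hs, rfl⟩ := intermediate_value_Icc hb0 (h.1.1.mono Set.Icc_subset_Ici_self)
        ⟨h.1.2.2.trans_le hy, hb⟩
      exact ⟨s, hfn s hs.1⟩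
    · exact ⟨y, if_neg hy⟩
  set e := hmono.orderIsoOfSurjective f hsurj with he
  have hef : ∀ s, e s = f s := fun s => rfl
  have he0 : e.symm 0 = 0 := by
    rw [e.symm_apply_eq, hef, hfn 0 le_rfl, h.1.2.2]
  refine ⟨e.symm, ⟨e.symm.continuous.continuousOn, e.symm.strictMono.strictMonoOn _, he0⟩, ?_, ?_⟩
  · intro s hs
    rw [← hfn s hs, ← hef, e.symm_apply_apply]
  · intro s hs
    have : 0 ≤ e.symm s := he0 ▸ e.symm.monotone hs
    rw [← hfn _ this, ← hef, e.apply_symm_apply]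

/-- The map `v ↦ v - a v / 2` need not be increasing, but it is dominated by a K-function lying
strictly below the identity: the average of its running maximum and the identity. -/
lemma exists_contraction {a : ℝ → ℝ} (ha : IsKFun a) :
    ∃ F : ℝ → ℝ, IsKFun F ∧ (∀ v, 0 ≤ v → v - a v / 2 ≤ F v) ∧ ∀ v, 0 < v → F v < v := by
  set G : ℝ → ℝ := fun v => sSup ((fun u => u - a u / 2) '' Set.Icc 0 v) with hG
  have hbdd : ∀ v, BddAbove ((fun u => u - a u / 2) '' Set.Icc 0 v) := by
    rintro v
    refine ⟨v, ?_⟩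
    rintro _ ⟨u, hu, rfl⟩
    have := ha.nonneg hu.1
    have := hu.2
    dsimp only
    linarith
  have hle : ∀ u v, 0 ≤ u → u ≤ v → u - a u / 2 ≤ G v := fun u v hu huv =>
    le_csSup (hbdd v) ⟨u, ⟨hu, huv⟩, rfl⟩
  have hGle : ∀ v M, 0 ≤ v → (∀ u, 0 ≤ u → u ≤ v → u - a u / 2 ≤ M) → G v ≤ M := by
    intro v M hv hM
    refine csSup_le ⟨_, v, ⟨hv, le_rfl⟩, rfl⟩ ?_
    rintro _ ⟨u, hu, rfl⟩
    exact hM u hu.1 hu.2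
  have hmono : ∀ s t, 0 ≤ s → s ≤ t → G s ≤ G t := fun s t hs hst =>
    hGle s _ hs fun u hu hus => hle u t hu (hus.trans hst)
  -- Since `a` is increasing, the running maximum grows with slope at most `1`.
  have hlip : ∀ s t, 0 ≤ s → s ≤ t → G t ≤ G s + (t - s) := by
    intro s t hs hst
    refine hGle t _ (hs.trans hst) fun u hu hut => ?_
    rcases le_total u s with hus | hsu
    · have := hle u s hu hus
      linarith
    · have := hle s s hs le_rfl
      have := ha.mono hs hsu
      linarith
  have hG0 : G 0 = 0 := by
    simp [hG, ha.2.2]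
  have hcont : ContinuousOn G (Set.Ici 0) := by
    refine (LipschitzOnWith.of_dist_le_mul (K := 1) ?_).continuousOn
    intro s hs t ht
    rw [Real.dist_eq, Real.dist_eq, NNReal.coe_one, one_mul]
    rcases le_total s t with hst | hst
    · have h1 := hmono s t hs hst
      have h2 := hlip s t hs hst
      rw [abs_of_nonpos (by linarith), abs_of_nonpos (by linarith)]
      linarith
    · have h1 := hmono t s ht hst
      have h2 := hlip t s ht hst
      rw [abs_of_nonneg (by linarith), abs_of_nonneg (by linarith)]
      linarith
  refine ⟨fun v => (G v + v) / 2, ⟨(hcont.add continuousOn_id).div_const 2, ?_, ?_⟩, ?_, ?_⟩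
  · intro s hs t _ hst
    have := hmono s t hs hst.le
    dsimp only
    linarith
  · simp [hG0]
  · intro v hv
    have := hle v v hv le_rfl
    have := ha.nonneg hv
    dsimp only
    linarith
  · intro v hv
    have hpos := ha.pos (half_pos hv)
    -- On `[0, v/2]` the argument is small; on `[v/2, v]` the subtracted term is at least `a (v/2) / 2`.
    have : G v ≤ max (v / 2) (v - a (v / 2) / 2) := by
      refine hGle v _ hv.le fun u hu huv => ?_
      rcases le_total u (v / 2) with h | h
      · have := ha.nonneg hu
        exact le_max_of_le_left (by linarith)
      · have := ha.mono (half_pos hv).le h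
        exact le_max_of_le_right (by linarith)
    have : max (v / 2) (v - a (v / 2) / 2) < v := max_lt (by linarith) (by linarith)
    dsimp only
    linarith

lemma iterate_antitone {F : ℝ → ℝ} (hF : IsKFun F) (hlt : ∀ v, 0 < v → F v < v) {s : ℝ}
    (hs : 0 ≤ s) : Antitone (fun n : ℕ => F^[n] s) := by
  refine antitone_nat_of_succ_le fun n => ?_
  rw [Function.iterate_succ_apply']
  rcases ((hF.iterate n).nonneg hs).eq_or_lt with h | h
  · rw [← h, hF.2.2]
  · exact (hlt _ h).le

lemma iterate_tendsto {F : ℝ → ℝ} (hF : IsKFun F) (hlt : ∀ v, 0 < v → F v < v) {s : ℝ}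
    (hs : 0 ≤ s) : Tendsto (fun n : ℕ => F^[n] s) atTop (𝓝 0) := by
  have hnn : ∀ n, 0 ≤ F^[n] s := fun n => (hF.iterate n).nonneg hs
  have hbdd : BddBelow (Set.range fun n : ℕ => F^[n] s) := ⟨0, by rintro _ ⟨n, rfl⟩; exact hnn n⟩
  have hlim := tendsto_atTop_ciInf (iterate_antitone hF hlt hs) hbdd
  set l := ⨅ n : ℕ, F^[n] s
  have hl : 0 ≤ l := le_ciInf hnn
  have h1 : Tendsto (fun n : ℕ => F (F^[n] s)) atTop (𝓝 (F l)) :=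
    (hF.1 l hl).tendsto.comp
      (tendsto_nhdsWithin_iff.2 ⟨hlim, Eventually.of_forall hnn⟩)
  have h2 : Tendsto (fun n : ℕ => F (F^[n] s)) atTop (𝓝 l) := by
    simpa only [Function.iterate_succ_apply'] using (tendsto_add_atTop_iff_nat 1).2 hlim
  have hfix := tendsto_nhds_unique h1 h2
  rcases hl.eq_or_lt with h | h
  · rwa [← h] at hlim
  · exact absurd hfix (hlt l h).ne

/-- Rounding time down turns the iterates of a contraction, composed with K-functions on both
sides, into a KL-function of real time. -/
lemma isKLFun_iterate {F φ ψ : ℝ → ℝ} (hF : IsKFun F) (hlt : ∀ v, 0 < v → F v < v)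
    (hφ : IsKFun φ) (hψ : IsKFun ψ) : IsKLFun (fun s t => φ (F^[⌊t⌋₊] (ψ s))) := by
  refine ⟨fun t _ => hφ.comp ((hF.iterate _).comp hψ), fun s hs => ⟨?_, ?_⟩⟩
  · intro t _ t' _ htt
    exact hφ.mono ((hF.iterate _).nonneg (hψ.nonneg hs))
      (iterate_antitone hF hlt (hψ.nonneg hs) (Nat.floor_le_floor htt))
  · have h0 := (hφ.1 0 (Set.mem_Ici.2 le_rfl)).tendsto
    rw [hφ.2.2] at h0
    refine h0.comp (tendsto_nhdsWithin_iff.2 ⟨?_, Eventually.of_forall fun t => ?_⟩)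
    · exact (iterate_tendsto hF hlt (hψ.nonneg hs)).comp tendsto_nat_floor_atTop
    · exact (hF.iterate _).nonneg (hψ.nonneg hs)

/-- Lemma 2 (Goulart et al., case (ii)): for systems of the form `x⁺ = g(x) + w` with `g`
continuous, a Lipschitz Lyapunov function for the undisturbed system is an ISS-Lyapunov
function, and the origin is ISS. -/
theorem statement2 {nx : ℕ}
    (g : EuclideanSpace ℝ (Fin nx) → EuclideanSpace ℝ (Fin nx))
    (X W : Set (EuclideanSpace ℝ (Fin nx)))
    (hW : IsBounded W) (h0W : (0 : EuclideanSpace ℝ (Fin nx)) ∈ W)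
    (hg : ContinuousOn g X)
    (h0X : (0 : EuclideanSpace ℝ (Fin nx)) ∈ interior X)
    (hinv : ∀ x ∈ X, ∀ w ∈ W, g x + w ∈ X)
    (V : EuclideanSpace ℝ (Fin nx) → ℝ)
    (hVlip : ∃ L : NNReal, LipschitzOnWith L V X) (hVnn : ∀ x ∈ X, 0 ≤ V x)
    (α₁ α₂ α₃ : ℝ → ℝ)
    (hα₁ : IsKInfFun α₁) (hα₂ : IsKInfFun α₂) (hα₃ : IsKInfFun α₃)
    (hlow : ∀ x ∈ X, α₁ ‖x‖ ≤ V x) (hup : ∀ x ∈ X, V x ≤ α₂ ‖x‖)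
    (hdec : ∀ x ∈ X, V (g x) - V x ≤ -α₃ ‖x‖) :
    (∃ σ : ℝ → ℝ, IsKFun σ ∧
      ∀ x ∈ X, ∀ w ∈ W, V (g x + w) - V x ≤ -α₃ ‖x‖ + σ ‖w‖) ∧
    ∃ (β : ℝ → ℝ → ℝ) (γ : ℝ → ℝ), IsKLFun β ∧ IsKFun γ ∧
      ∀ (x w : ℕ → EuclideanSpace ℝ (Fin nx)),
        x 0 ∈ X → (∀ t, w t ∈ W) → (∀ k, x (k+1) = g (x k) + w k) →
        ∀ k, 1 ≤ k → ‖x k‖ ≤ β ‖x 0‖ (k : ℝ) + γ (⨆ t : Fin k, ‖w (t : ℕ)‖) := by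
  obtain ⟨L, hL⟩ := hVlip
  have hgX : ∀ x ∈ X, g x ∈ X := fun x hx => by simpa using hinv x hx 0 h0W
  have hLpos : (0 : ℝ) < L + 1 := by positivity
  have hσ := isKFun_mul hLpos
  have hiss : ∀ x ∈ X, ∀ w ∈ W, V (g x + w) - V x ≤ -α₃ ‖x‖ + (L + 1) * ‖w‖ := by
    intro x hx w hw
    have h1 := hL.dist_le_mul _ (hinv x hx w hw) _ (hgX x hx)
    rw [Real.dist_eq, dist_eq_norm, add_sub_cancel_left] at h1
    have h2 := le_abs_self (V (g x + w) - V (g x))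
    have h3 := hdec x hx
    have h4 := norm_nonneg w
    linarith
  refine ⟨⟨_, hσ, hiss⟩, ?_⟩
  obtain ⟨i₁, hi₁, hi₁l, -⟩ := hα₁.exists_inverse
  obtain ⟨i₂, hi₂, hi₂l, hi₂r⟩ := hα₂.exists_inverse
  obtain ⟨i₃, hi₃, hi₃l, -⟩ := hα₃.exists_inverse
  -- `a = α₃ ∘ α₂⁻¹`, with inverse `α₂ ∘ α₃⁻¹`.
  set a : ℝ → ℝ := fun v => α₃ (i₂ v) with ha_def
  have ha : IsKFun a := hα₃.1.comp hi₂
  obtain ⟨F, hF, hFge, hFlt⟩ := exists_contraction ha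
  have hΓ : IsKFun (fun c => α₂ (i₃ (2 * c)) + 1 * c) :=
    (hα₂.1.comp (hi₃.comp (isKFun_mul two_pos))).add (isKFun_mul one_pos)
  refine ⟨_, _, isKLFun_iterate hF hFlt hi₁ hα₂.1, hi₁.comp (hΓ.comp hσ), ?_⟩
  intro x w hx0 hw hx k _
  have hxX : ∀ j, x j ∈ X := by
    intro j
    induction j with
    | zero => exact hx0
    | succ j ih => rw [hx j]; exact hinv _ ih _ (hw j)
  set r : ℝ := ⨆ t : Fin k, ‖w (t : ℕ)‖ with hr_def
  have hr : 0 ≤ r := Real.iSup_nonneg fun t => norm_nonneg _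
  have hwr : ∀ j < k, ‖w j‖ ≤ r := fun j hj =>
    le_ciSup (f := fun t : Fin k => ‖w (t : ℕ)‖) (Set.finite_range _).bddAbove ⟨j, hj⟩
  set c : ℝ := (L + 1) * r with hc_def
  have hc : 0 ≤ c := by positivity
  set Γ : ℝ := α₂ (i₃ (2 * c)) + 1 * c with hΓ_def
  have hΓ0 : 0 ≤ Γ := hΓ.nonneg hc
  have hV0 : ∀ j, 0 ≤ V (x j) := fun j => hVnn _ (hxX j)
  have hFle : ∀ v, 0 ≤ v → F v ≤ v := fun v hv => by
    rcases hv.eq_or_lt with h | h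
    · rw [← h, hF.2.2]
    · exact (hFlt v h).le
  have hstep : ∀ j < k, V (x (j + 1)) ≤ V (x j) - a (V (x j)) + c := by
    intro j hj
    have h1 := hiss _ (hxX j) _ (hw j)
    rw [← hx j] at h1
    have h2 : a (V (x j)) ≤ α₃ ‖x j‖ := by
      refine hα₃.1.mono (hi₂.nonneg (hV0 j)) ?_
      rw [← hi₂l ‖x j‖ (norm_nonneg _)]
      exact hi₂.mono (hV0 j) (hup _ (hxX j))
    have h3 := mul_le_mul_of_nonneg_left (hwr j hj) hLpos.le
    linarith
  have hmain : ∀ j ≤ k, V (x j) ≤ max (F^[j] (α₂ ‖x 0‖)) Γ := by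
    intro j
    induction j with
    | zero => intro _; exact le_max_of_le_left (hup _ hx0)
    | succ j ih =>
      intro hj
      have hs := hstep j hj
      have hv := hV0 j
      rcases le_total c (a (V (x j)) / 2) with h | h
      · have h1 : V (x (j + 1)) ≤ F (V (x j)) := by
          have := hFge _ hv
          linarith
        refine h1.trans ?_
        rw [Function.iterate_succ_apply']
        rcases le_max_iff.1 (ih (Nat.le_of_succ_le hj)) with h2 | h2
        · exact le_max_of_le_left (hF.mono hv h2)
        · exact le_max_of_le_right ((hFle _ hv).trans h2)
      · refine le_max_of_le_right ?_
        have h1 : V (x j) ≤ α₂ (i₃ (2 * c)) := by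
          rw [← hi₂r _ hv]
          refine hα₂.1.mono (hi₂.nonneg hv) ?_
          rw [← hi₃l _ (hi₂.nonneg hv)]
          exact hi₃.mono (ha.nonneg hv) (by linarith)
        have := ha.nonneg hv
        linarith
  have hs0 : 0 ≤ F^[k] (α₂ ‖x 0‖) := (hF.iterate k).nonneg (hα₂.1.nonneg (norm_nonneg _))
  have h1 : ‖x k‖ ≤ i₁ (V (x k)) := by
    rw [← hi₁l ‖x k‖ (norm_nonneg _)]
    refine hi₁.mono (hα₁.1.nonneg (norm_nonneg _)) ?_
    exact hlow _ (hxX k)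
  have h2 := hi₁.nonneg hs0
  have h3 := hi₁.nonneg hΓ0
  simp only [Nat.floor_natCast]
  refine h1.trans ?_
  rcases le_max_iff.1 (hmain k le_rfl) with h | h
  · have := hi₁.mono (hV0 k) h
    linarith
  · have := hi₁.mono (hV0 k) h
    linarith
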